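/- arXiv:1902.01158 — 5 statements merged into one kernel-verified Lean document; each statement's English description precedes it below -/
import Mathlib

section
/- Suppose r₁, r₂, r₃, r₄ > 0 and t₁ < t₂ < t₃ < t₄ are real numbers, and consider the four circles Cᵢ in ℝ² with centers (tᵢ, rᵢ) and radii rᵢ (each tangent to the x-axis from above at (tᵢ,0)). Assume that C₁ is externally tangent to C₂ and to C₄, and that C₃ is externally tangent to C₂ and to C₄ (distance between centers equals sum of radii in each case). Then (t₃ − t₂)·(t₄ − t₁) = (t₂ − t₁)·(t₄ − t₃). -/
/-- The point `(x, y)` in the Euclidean plane `ℝ²` (with the Euclidean distance). -/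
noncomputable def pt (x y : ℝ) : EuclideanSpace ℝ (Fin 2) :=
  (WithLp.equiv 2 (Fin 2 → ℝ)).symm ![x, y]

theorem tangent_sq {a b r s : ℝ} (h : dist (pt a r) (pt b s) = r + s) :
    (a - b) ^ 2 = 4 * r * s := by
  have h2 : dist (pt a r) (pt b s) ^ 2 = (a - b) ^ 2 + (r - s) ^ 2 := by
    rw [EuclideanSpace.dist_eq, Real.sq_sqrt (by positivity)]
    simp [pt, Real.dist_eq, sq_abs]
  rw [h] at h2
  linarith

/-- Lemma 2(i): for four circles tangent to the x-axis from above at `t₁ < t₂ < t₃ < t₄`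
with `C₁` tangent to `C₂, C₄` and `C₃` tangent to `C₂, C₄`, we have `m·n = ℓ·r`. -/
theorem gap_product_eq (r₁ r₂ r₃ r₄ t₁ t₂ t₃ t₄ : ℝ)
    (hr₁ : 0 < r₁) (hr₂ : 0 < r₂) (hr₃ : 0 < r₃) (hr₄ : 0 < r₄)
    (h₁₂ : t₁ < t₂) (h₂₃ : t₂ < t₃) (h₃₄ : t₃ < t₄)
    (htan₁₂ : dist (pt t₁ r₁) (pt t₂ r₂) = r₁ + r₂)
    (htan₁₄ : dist (pt t₁ r₁) (pt t₄ r₄) = r₁ + r₄)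
    (htan₃₂ : dist (pt t₃ r₃) (pt t₂ r₂) = r₃ + r₂)
    (htan₃₄ : dist (pt t₃ r₃) (pt t₄ r₄) = r₃ + r₄) :
    (t₃ - t₂) * (t₄ - t₁) = (t₂ - t₁) * (t₄ - t₃) := by
  have e1 := tangent_sq htan₁₂
  have e2 := tangent_sq htan₁₄
  have e3 := tangent_sq htan₃₂
  have e4 := tangent_sq htan₃₄
  have p1 : 0 ≤ (t₃ - t₂) * (t₄ - t₁) := mul_nonneg (by linarith) (by linarith)
  have p2 : 0 ≤ (t₂ - t₁) * (t₄ - t₃) := mul_nonneg (by linarith) (by linarith)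
  rw [← sq_eq_sq₀ p1 p2]
  calc ((t₃ - t₂) * (t₄ - t₁)) ^ 2 = (t₃ - t₂) ^ 2 * (t₁ - t₄) ^ 2 := by ring
    _ = (t₁ - t₂) ^ 2 * (t₃ - t₄) ^ 2 := by rw [e1, e2, e3, e4]; ring
    _ = ((t₂ - t₁) * (t₄ - t₃)) ^ 2 := by ring
end

section
/- Suppose r₁, r₂, r₃, r₄ > 0 and t₁ < t₂ < t₃ < t₄ are real numbers, and consider the four circles Cᵢ in ℝ² with centers (tᵢ, rᵢ) and radii rᵢ (each tangent to the x-axis from above at (tᵢ,0)). Assume that C₁ is externally tangent to C₂ and to C₄, and that C₃ is externally tangent to C₂ and to C₄. Then, setting ℓ = t₂ − t₁, m = t₃ − t₂ and r = t₄ − t₃, one has ℓ·r = m·(ℓ + m + r). -/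
/-- For four circles tangent to the x-axis from above at `t₁ < t₂ < t₃ < t₄`
with `C₁` tangent to `C₂, C₄` and `C₃` tangent to `C₂, C₄`, setting
`ℓ = t₂ - t₁`, `m = t₃ - t₂`, `r = t₄ - t₃`, we have `ℓ·r = m·(ℓ + m + r)`. -/
theorem gap_quadratic (r₁ r₂ r₃ r₄ t₁ t₂ t₃ t₄ : ℝ)
    (hr₁ : 0 < r₁) (hr₂ : 0 < r₂) (hr₃ : 0 < r₃) (hr₄ : 0 < r₄)
    (h₁₂ : t₁ < t₂) (h₂₃ : t₂ < t₃) (h₃₄ : t₃ < t₄)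
    (htan₁₂ : dist (pt t₁ r₁) (pt t₂ r₂) = r₁ + r₂)
    (htan₁₄ : dist (pt t₁ r₁) (pt t₄ r₄) = r₁ + r₄)
    (htan₃₂ : dist (pt t₃ r₃) (pt t₂ r₂) = r₃ + r₂)
    (htan₃₄ : dist (pt t₃ r₃) (pt t₄ r₄) = r₃ + r₄) :
    (t₂ - t₁) * (t₄ - t₃) = (t₃ - t₂) * ((t₂ - t₁) + (t₃ - t₂) + (t₄ - t₃)) := by
  have key : ∀ a b c d : ℝ, dist (pt a b) (pt c d) = b + d → (a - c) ^ 2 = 4 * b * d := by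
    intro a b c d h
    have h2 : dist (pt a b) (pt c d) ^ 2 = (a - c) ^ 2 + (b - d) ^ 2 := by
      rw [EuclideanSpace.dist_eq, Real.sq_sqrt (by positivity)]
      simp [pt, Fin.sum_univ_two, Real.dist_eq, sq_abs]
    rw [h] at h2
    linarith
  have e12 := key _ _ _ _ htan₁₂
  have e14 := key _ _ _ _ htan₁₄
  have e32 := key _ _ _ _ htan₃₂
  have e34 := key _ _ _ _ htan₃₄
  have hl : 0 < t₂ - t₁ := by linarith
  have hm : 0 < t₃ - t₂ := by linarith
  have hr : 0 < t₄ - t₃ := by linarith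
  have hsq : ((t₂ - t₁) * (t₄ - t₃)) ^ 2
      = ((t₃ - t₂) * ((t₂ - t₁) + (t₃ - t₂) + (t₄ - t₃))) ^ 2 := by
    calc ((t₂ - t₁) * (t₄ - t₃)) ^ 2 = (t₁ - t₂) ^ 2 * (t₃ - t₄) ^ 2 := by ring
      _ = (t₃ - t₂) ^ 2 * (t₁ - t₄) ^ 2 := by rw [e12, e34, e32, e14]; ring
      _ = _ := by ring
  exact (pow_left_inj₀ (by positivity) (by positivity) two_ne_zero).mp hsq
end

section
/- Suppose r₁, r₂, r₃, r₄ > 0 and t₁ < t₂ < t₃ < t₄ are real numbers, and consider the four circles Cᵢ in ℝ² with centers (tᵢ, rᵢ) and radii rᵢ (each tangent to the x-axis from above at (tᵢ,0)). Assume that C₁ is externally tangent to C₂ and to C₄, and that C₃ is externally tangent to C₂ and to C₄. Then t₃ − t₂ = f(t₂ − t₁, t₄ − t₃), where f(ℓ, r) = (−(ℓ + r) + √((ℓ + r)² + 4·ℓ·r))/2. That is, the middle gap m = t₃ − t₂ is determined by the outer gaps ℓ = t₂ − t₁ and r = t₄ − t₃. -/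
theorem pt_tangent {a b x y : ℝ} (h : dist (pt a x) (pt b y) = x + y) :
    (a - b) ^ 2 = 4 * x * y := by
  have h2 : dist (pt a x) (pt b y) ^ 2 = (a - b) ^ 2 + (x - y) ^ 2 := by
    rw [EuclideanSpace.dist_eq, Real.sq_sqrt (by positivity)]
    simp [pt, Fin.sum_univ_two, Real.dist_eq, sq_abs]
  rw [h] at h2
  linarith

/-- Lemma 2(ii): the middle gap `m = t₃ - t₂` is determined by the outer gaps
`ℓ = t₂ - t₁` and `r = t₄ - t₃` via `m = f(ℓ, r) = (-(ℓ+r) + √((ℓ+r)² + 4ℓr))/2`. -/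
theorem middle_gap_eq (r₁ r₂ r₃ r₄ t₁ t₂ t₃ t₄ : ℝ)
    (hr₁ : 0 < r₁) (hr₂ : 0 < r₂) (hr₃ : 0 < r₃) (hr₄ : 0 < r₄)
    (h₁₂ : t₁ < t₂) (h₂₃ : t₂ < t₃) (h₃₄ : t₃ < t₄)
    (htan₁₂ : dist (pt t₁ r₁) (pt t₂ r₂) = r₁ + r₂)
    (htan₁₄ : dist (pt t₁ r₁) (pt t₄ r₄) = r₁ + r₄)
    (htan₃₂ : dist (pt t₃ r₃) (pt t₂ r₂) = r₃ + r₂)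
    (htan₃₄ : dist (pt t₃ r₃) (pt t₄ r₄) = r₃ + r₄) :
    t₃ - t₂ = (-((t₂ - t₁) + (t₄ - t₃)) +
      Real.sqrt (((t₂ - t₁) + (t₄ - t₃)) ^ 2 + 4 * (t₂ - t₁) * (t₄ - t₃))) / 2 := by
  have e₁₂ := pt_tangent htan₁₂
  have e₁₄ := pt_tangent htan₁₄
  have e₃₂ := pt_tangent htan₃₂
  have e₃₄ := pt_tangent htan₃₄
  have hsq : ((t₂ - t₁) * (t₄ - t₃)) ^ 2 = ((t₃ - t₂) * (t₄ - t₁)) ^ 2 := by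
    calc ((t₂ - t₁) * (t₄ - t₃)) ^ 2 = (t₁ - t₂) ^ 2 * (t₃ - t₄) ^ 2 := by ring
      _ = (t₃ - t₂) ^ 2 * (t₁ - t₄) ^ 2 := by rw [e₁₂, e₁₄, e₃₂, e₃₄]; ring
      _ = ((t₃ - t₂) * (t₄ - t₁)) ^ 2 := by ring
  have key : (t₂ - t₁) * (t₄ - t₃) = (t₃ - t₂) * (t₄ - t₁) :=
    (sq_eq_sq₀ (mul_nonneg (by linarith) (by linarith))
      (mul_nonneg (by linarith) (by linarith))).1 hsq
  have hs : ((t₂ - t₁) + (t₄ - t₃)) ^ 2 + 4 * (t₂ - t₁) * (t₄ - t₃)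
      = (2 * (t₃ - t₂) + (t₂ - t₁) + (t₄ - t₃)) ^ 2 := by
    linear_combination 4 * key
  rw [hs, Real.sqrt_sq (by linarith)]
  ring
end

section
/- The function f(ℓ, r) = (−(ℓ + r) + √((ℓ + r)² + 4·ℓ·r))/2 is strictly increasing in each variable on positive reals: for every fixed r > 0, if 0 < ℓ₁ < ℓ₂ then f(ℓ₁, r) < f(ℓ₂, r); and for every fixed ℓ > 0, if 0 < r₁ < r₂ then f(ℓ, r₁) < f(ℓ, r₂). -/
theorem f_aux (r a b : ℝ) (hr : 0 < r) (ha : 0 < a) (hab : a < b) :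
    (-(a + r) + Real.sqrt ((a + r) ^ 2 + 4 * a * r)) / 2 <
      (-(b + r) + Real.sqrt ((b + r) ^ 2 + 4 * b * r)) / 2 := by
  have hs : Real.sqrt ((a + r) ^ 2 + 4 * a * r) < a + 3 * r := by
    rw [Real.sqrt_lt' (by positivity)]
    nlinarith [mul_pos hr hr]
  have hsq := Real.sq_sqrt (show 0 ≤ (a + r) ^ 2 + 4 * a * r by positivity)
  have key : Real.sqrt ((a + r) ^ 2 + 4 * a * r) + (b - a) <
      Real.sqrt ((b + r) ^ 2 + 4 * b * r) := by
    apply Real.lt_sqrt_of_sq_lt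
    nlinarith [mul_pos (sub_pos.2 hab) (sub_pos.2 hs)]
  linarith

/-- Lemma 2(iii): `f(ℓ, r) = (-(ℓ+r) + √((ℓ+r)² + 4ℓr))/2` is strictly increasing in
each variable on the positive reals. -/
theorem f_strictMono_each :
    (∀ r : ℝ, 0 < r → ∀ ℓ₁ ℓ₂ : ℝ, 0 < ℓ₁ → ℓ₁ < ℓ₂ →
      (-(ℓ₁ + r) + Real.sqrt ((ℓ₁ + r) ^ 2 + 4 * ℓ₁ * r)) / 2 <
        (-(ℓ₂ + r) + Real.sqrt ((ℓ₂ + r) ^ 2 + 4 * ℓ₂ * r)) / 2) ∧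
    (∀ ℓ : ℝ, 0 < ℓ → ∀ r₁ r₂ : ℝ, 0 < r₁ → r₁ < r₂ →
      (-(ℓ + r₁) + Real.sqrt ((ℓ + r₁) ^ 2 + 4 * ℓ * r₁)) / 2 <
        (-(ℓ + r₂) + Real.sqrt ((ℓ + r₂) ^ 2 + 4 * ℓ * r₂)) / 2) := by
  refine ⟨fun r hr a b ha hab => f_aux r a b hr ha hab, fun l hl a b ha hab => ?_⟩
  have h := f_aux l a b hl ha hab
  rw [add_comm l a, add_comm l b, mul_right_comm 4 l a, mul_right_comm 4 l b]
  exact h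
end

section
/- Let f(ℓ, r) = (−(ℓ + r) + √((ℓ + r)² + 4·ℓ·r))/2. If 0 < ℓ < ℓ' and 0 < r < r' are real numbers, then f(ℓ, r) < f(ℓ', r'). -/
/-- Strict joint monotonicity of `f(ℓ, r) = (-(ℓ+r) + √((ℓ+r)² + 4ℓr))/2`:
if `0 < ℓ < ℓ'` and `0 < r < r'` then `f(ℓ, r) < f(ℓ', r')`. -/
theorem f_strictMono_joint (ℓ ℓ' r r' : ℝ) (hℓ : 0 < ℓ) (hℓ' : ℓ < ℓ')
    (hr : 0 < r) (hr' : r < r') :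
    (-(ℓ + r) + Real.sqrt ((ℓ + r) ^ 2 + 4 * ℓ * r)) / 2 <
      (-(ℓ' + r') + Real.sqrt ((ℓ' + r') ^ 2 + 4 * ℓ' * r')) / 2 := by
  obtain ⟨x, hx⟩ : ∃ x, x = (-(ℓ + r) + Real.sqrt ((ℓ + r) ^ 2 + 4 * ℓ * r)) / 2 := ⟨_, rfl⟩
  have hp : 0 < ℓ * r := mul_pos hℓ hr
  have hsq : Real.sqrt ((ℓ + r) ^ 2 + 4 * ℓ * r) ^ 2 = (ℓ + r) ^ 2 + 4 * ℓ * r :=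
    Real.sq_sqrt (by positivity)
  have hs : Real.sqrt ((ℓ + r) ^ 2 + 4 * ℓ * r) = 2 * x + (ℓ + r) := by linarith
  have hlt : ℓ + r < Real.sqrt ((ℓ + r) ^ 2 + 4 * ℓ * r) :=
    Real.lt_sqrt_of_sq_lt (by linarith)
  have hx0 : 0 < x := by linarith
  rw [hs] at hsq
  have hq : (ℓ - x) * (r - x) = 2 * x ^ 2 := by linarith
  have hxl : x < ℓ := by
    by_contra h
    nlinarith [mul_nonneg (sub_nonneg.2 (not_lt.1 h)) hr.le, mul_pos hx0 hℓ, mul_pos hx0 hx0]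
  have hxr : x < r := by
    by_contra h
    nlinarith [mul_nonneg (sub_nonneg.2 (not_lt.1 h)) hℓ.le, mul_pos hx0 hr, mul_pos hx0 hx0]
  have hm : (ℓ - x) * (r - x) < (ℓ' - x) * (r' - x) :=
    mul_lt_mul'' (by linarith) (by linarith) (by linarith) (by linarith)
  have hfin : 2 * x + (ℓ' + r') < Real.sqrt ((ℓ' + r') ^ 2 + 4 * ℓ' * r') :=
    Real.lt_sqrt_of_sq_lt (by linarith)
  rw [← hx]
  linarith
end
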